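/- For every ξ ∈ (0, 1/2], one has ξ² − ξ + 1 ≥ 12·ξ²·(1−ξ)², with equality if and only if ξ = 1/2. Consequently, if γ > 0, β > 0, ξ ∈ (0, 1/2], k > 0, and ω(−1+ξ) = ω(ξ) (with c₀ = γ/k² + βk² and ω(x) = k²·x·(c₀ − βk²x²) − γ/x), then k⁴ ≥ 4γ/β. -/

import Mathlib

/-- Dispersion function of the linearized Ostrovsky equation,
with `c₀ = γ/k² + βk²` built in. -/
noncomputable def omega (γ β k x : ℝ) : ℝ :=
  k^2 * x * ((γ/k^2 + β*k^2) - β*k^2*x^2) - γ/x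

/-!
With `p = ξ(1 - ξ)`, the collision `ω(ξ - 1) = ω(ξ)` reads `3βk⁴p² = γ(1 - p)`, so that
`4γ/β = k⁴ · 12p²/(1 - p)`. Since `1 - p - 12p² = (1 - 4p)(1 + 3p)` and `1 - 4p = (1 - 2ξ)²`,
the last factor is at most `1` as long as `p ≥ -1/3`, in particular for `ξ` in `(0, 1)`.
-/

section Quartic

theorem sq_sub_self_add_one_sub_quartic {R : Type*} [CommRing R] (ξ : R) :
    ξ ^ 2 - ξ + 1 - 12 * ξ ^ 2 * (1 - ξ) ^ 2 = (1 - 2 * ξ) ^ 2 * (1 + 3 * ξ * (1 - ξ)) := by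
  ring

theorem quartic_le_sq_sub_self_add_one {R : Type*} [CommRing R] [LinearOrder R]
    [IsStrictOrderedRing R] {ξ : R} (hξ : 0 ≤ 1 + 3 * ξ * (1 - ξ)) :
    12 * ξ ^ 2 * (1 - ξ) ^ 2 ≤ ξ ^ 2 - ξ + 1 := by
  rw [← sub_nonneg, sq_sub_self_add_one_sub_quartic]
  exact mul_nonneg (sq_nonneg _) hξ

theorem sq_sub_self_add_one_eq_quartic_iff {K : Type*} [Field K] [NeZero (2 : K)] {ξ : K}
    (hξ : 1 + 3 * ξ * (1 - ξ) ≠ 0) :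
    ξ ^ 2 - ξ + 1 = 12 * ξ ^ 2 * (1 - ξ) ^ 2 ↔ ξ = 1 / 2 := by
  rw [← sub_eq_zero, sq_sub_self_add_one_sub_quartic, mul_eq_zero_iff_right hξ,
    sq_eq_zero_iff, sub_eq_zero, eq_div_iff two_ne_zero, mul_comm, eq_comm]

theorem sq_sub_self_add_one_pos {K : Type*} [Field K] [LinearOrder K] [IsStrictOrderedRing K]
    (ξ : K) : 0 < ξ ^ 2 - ξ + 1 := by
  have complete_square : ξ ^ 2 - ξ + 1 = (ξ - 1 / 2) ^ 2 + 3 / 4 := by ring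
  rw [complete_square]
  positivity

end Quartic

section Collision

variable {γ β k ξ : ℝ}

theorem omega_sub_omega {x y : ℝ} (hk : k ≠ 0) (hx : x ≠ 0) (hy : y ≠ 0) :
    omega γ β k x - omega γ β k y =
      (x - y) * (γ + β * k ^ 4 * (1 - (x ^ 2 + x * y + y ^ 2)) + γ / (x * y)) := by
  unfold omega
  field_simp
  ring

theorem omega_neg_one_add_eq_iff (hk : k ≠ 0) (hξ₀ : ξ ≠ 0) (hξ₁ : ξ ≠ 1) :
    omega γ β k (-1 + ξ) = omega γ β k ξ ↔
      β * k ^ 4 * (3 * ξ ^ 2 * (1 - ξ) ^ 2) = γ * (ξ ^ 2 - ξ + 1) := by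
  have h₁ : 1 - ξ ≠ 0 := sub_ne_zero.mpr hξ₁.symm
  have hne : -1 + ξ ≠ 0 := by simpa [neg_add_eq_sub] using sub_ne_zero.mpr hξ₁
  have gap : omega γ β k ξ - omega γ β k (-1 + ξ) =
      (β * k ^ 4 * (3 * ξ ^ 2 * (1 - ξ) ^ 2) - γ * (ξ ^ 2 - ξ + 1)) / (ξ * (1 - ξ)) := by
    have hprod : ξ * (-1 + ξ) = -(ξ * (1 - ξ)) := by ring
    rw [omega_sub_omega hk hξ₀ hne, hprod, div_neg]
    field_simp
    ring
  rw [eq_comm, ← sub_eq_zero, gap, div_eq_zero_iff, or_iff_left (mul_ne_zero hξ₀ h₁),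
    sub_eq_zero]

theorem four_mul_div_eq_of_omega_eq (hβ : β ≠ 0) (hk : k ≠ 0) (hξ₀ : ξ ≠ 0) (hξ₁ : ξ ≠ 1)
    (h : omega γ β k (-1 + ξ) = omega γ β k ξ) :
    4 * γ / β = k ^ 4 * (12 * ξ ^ 2 * (1 - ξ) ^ 2 / (ξ ^ 2 - ξ + 1)) := by
  have collision := (omega_neg_one_add_eq_iff hk hξ₀ hξ₁).mp h
  rw [← mul_div_assoc, div_eq_div_iff hβ (sq_sub_self_add_one_pos ξ).ne']
  linear_combination -4 * collision

theorem four_mul_div_le_pow_four_of_omega_eq (hβ : β ≠ 0) (hk : k ≠ 0) (hξ₀ : ξ ≠ 0)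
    (hξ₁ : ξ ≠ 1) (hξ : 0 ≤ 1 + 3 * ξ * (1 - ξ)) (h : omega γ β k (-1 + ξ) = omega γ β k ξ) :
    4 * γ / β ≤ k ^ 4 := by
  have ratio_le_one : 12 * ξ ^ 2 * (1 - ξ) ^ 2 / (ξ ^ 2 - ξ + 1) ≤ 1 :=
    (div_le_one (sq_sub_self_add_one_pos ξ)).mpr (quartic_le_sq_sub_self_add_one hξ)
  rw [four_mul_div_eq_of_omega_eq hβ hk hξ₀ hξ₁ h]
  exact mul_le_of_le_one_right (by positivity) ratio_le_one

end Collision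

theorem threshold_inequality_general :
    (∀ ξ : ℝ, 0 < 1 + 3 * ξ * (1 - ξ) →
      12 * ξ ^ 2 * (1 - ξ) ^ 2 ≤ ξ ^ 2 - ξ + 1 ∧
      (ξ ^ 2 - ξ + 1 = 12 * ξ ^ 2 * (1 - ξ) ^ 2 ↔ ξ = 1 / 2)) ∧
    (∀ γ β ξ k : ℝ, β ≠ 0 → ξ ≠ 0 → ξ ≠ 1 → 0 ≤ 1 + 3 * ξ * (1 - ξ) → k ≠ 0 →
      omega γ β k (-1 + ξ) = omega γ β k ξ → 4 * γ / β ≤ k ^ 4) :=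
  ⟨fun _ hξ => ⟨quartic_le_sq_sub_self_add_one hξ.le,
      sq_sub_self_add_one_eq_quartic_iff hξ.ne'⟩,
    fun _ _ _ _ hβ hξ₀ hξ₁ hξ hk => four_mul_div_le_pow_four_of_omega_eq hβ hk hξ₀ hξ₁ hξ⟩

theorem threshold_inequality :
    (∀ ξ : ℝ, 0 < ξ → ξ ≤ 1/2 →
      12*ξ^2*(1-ξ)^2 ≤ ξ^2 - ξ + 1 ∧
      (ξ^2 - ξ + 1 = 12*ξ^2*(1-ξ)^2 ↔ ξ = 1/2)) ∧
    (∀ γ β ξ k : ℝ, 0 < γ → 0 < β → 0 < ξ → ξ ≤ 1/2 → 0 < k →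
      omega γ β k (-1 + ξ) = omega γ β k ξ → 4*γ/β ≤ k^4) :=
  ⟨fun ξ h₀ h₁ => threshold_inequality_general.1 ξ (by nlinarith),
    fun γ β ξ k _ hβ h₀ h₁ hk => threshold_inequality_general.2 γ β ξ k hβ.ne' h₀.ne'
      (by linarith) (by nlinarith) hk.ne'⟩
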